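/- Let ξ be an aligned slope datum and let λ be a ξ-regular colored ℓ-multi-partition. Suppose r = (k;i,j) is a removable ī-node of λ and a = (k′;i′,j′) is an addable ī-node of λ with h^ξ(a) > h^ξ(r). Then h^ξ(a) ≥ h^ξ(r) + ξ_Ω + ξ_Ω̄, and moreover i′ − 1 ≥ i or j′ − 1 ≥ j. -/

import Mathlib

/-!
Suppose `0 < h(a) - h(r) < ξ_Ω + ξ_Ω̄`. The removable node `r = (k;i,j)` satisfies `λ(k)_i = j` and
`λ(k)'_j = i`, the addable node `a = (k';i',j')` satisfies `λ(k')_{i'} = j' - 1` and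
`λ(k')'_{j'} = i' - 1`. If `j < j'`, the box `(i', j)` lies in `λ(k')` and the triple
`((i', j), k', k)` is illegal; if `j' ≤ j`, the box `(i, j')` lies in `λ(k)` and the triple
`((i, j'), k, k')` is illegal. In both cases the congruence says that `r` and `a` have the same
color and the two inequalities say `0 < h(a) - h(r) < ξ_Ω + ξ_Ω̄`. So regularity gives the
first claim. For the second, `i' ≤ i` and `j' ≤ j` would give
`h(a) - h(r) ≤ ξ_{k'} - ξ_k < ξ_Ω + ξ_Ω̄` by alignment.
-/

open scoped Classical

/-- A partition: `part m` is the `(m+1)`-st part, i.e. `λ_{m+1}`. -/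
structure Ptn where
  part : ℕ → ℕ
  antitone' : ∀ i j : ℕ, i ≤ j → part j ≤ part i
  finite' : ∃ N : ℕ, ∀ i ≥ N, part i = 0

namespace Ptn

/-- `λ_i`, for `i ≥ 1`. -/
def row (q : Ptn) (i : ℕ) : ℕ := q.part (i - 1)

/-- Membership of the box `(i,j)` (boxes have `i, j ≥ 1`). -/
def mem (q : Ptn) (i j : ℕ) : Prop := 1 ≤ i ∧ 1 ≤ j ∧ j ≤ q.row i

/-- The dual partition `λ'_j = #{i ≥ 1 : λ_i ≥ j}`. -/
noncomputable def dual (q : Ptn) (j : ℕ) : ℕ := Nat.card {i : ℕ // 1 ≤ i ∧ j ≤ q.row i}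

/-- `arm_λ(i,j) = λ_i - j`. -/
def arm (q : Ptn) (i j : ℕ) : ℤ := (q.row i : ℤ) - (j : ℤ)

/-- `leg_λ(i,j) = λ'_j - i`. -/
noncomputable def leg (q : Ptn) (i j : ℕ) : ℤ := (q.dual j : ℤ) - (i : ℤ)

/-- `(i,j)` is an addable node of `q`. -/
def Addable (q : Ptn) (i j : ℕ) : Prop :=
  1 ≤ i ∧ 1 ≤ j ∧ q.row i = j - 1 ∧ (i = 1 ∨ j ≤ q.row (i - 1))

/-- `(i,j)` is a removable node of `q`. -/
def Removable (q : Ptn) (i j : ℕ) : Prop :=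
  1 ≤ i ∧ 1 ≤ j ∧ q.row i = j ∧ q.row (i + 1) < j

/-- The partition obtained by adding the box `(i,j)` (when `(i,j)` is addable). -/
noncomputable def addBox (q : Ptn) (i j : ℕ) : Ptn :=
  if h : ∃ q' : Ptn, ∀ m : ℕ, q'.part m = if m = i - 1 then j else q.part m then
    h.choose else q

/-- The partition obtained by removing the box `(i,j)` (when `(i,j)` is removable). -/
noncomputable def removeBox (q : Ptn) (i j : ℕ) : Ptn :=
  if h : ∃ q' : Ptn, ∀ m : ℕ, q'.part m = if m = i - 1 then j - 1 else q.part m then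
    h.choose else q

/-- The empty partition. -/
def empty : Ptn := ⟨fun _ => 0, fun _ _ _ => le_rfl, ⟨0, fun _ _ => rfl⟩⟩

end Ptn
/-- Nodes (triples) `(k; i, j)`. -/
abbrev Node (l : ℕ) := Fin l × ℕ × ℕ

/-- Multi-partitions with `l` components. -/
abbrev MP (l : ℕ) := Fin l → Ptn

/-- The color `p(k) - i + j` of the triple `(k;i,j)`. -/
def colorOf (n l : ℕ) (p : Fin l → ZMod n) (x : Node l) : ZMod n :=
  p x.1 - (x.2.1 : ZMod n) + (x.2.2 : ZMod n)

/-- `(k;i,j)` is a box of the multi-partition `lam`. -/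
def IsBox (l : ℕ) (lam : MP l) (x : Node l) : Prop := (lam x.1).mem x.2.1 x.2.2

/-- `(k;i,j)` is an addable `ib`-node of `lam`. -/
def IsAdd (n l : ℕ) (lam : MP l) (p : Fin l → ZMod n) (ib : ZMod n) (x : Node l) : Prop :=
  (lam x.1).Addable x.2.1 x.2.2 ∧ colorOf n l p x = ib

/-- `(k;i,j)` is a removable `ib`-node of `lam`. -/
def IsRem (n l : ℕ) (lam : MP l) (p : Fin l → ZMod n) (ib : ZMod n) (x : Node l) : Prop :=
  (lam x.1).Removable x.2.1 x.2.2 ∧ colorOf n l p x = ib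

/-- Add the box `x` to the multi-partition `lam`. -/
noncomputable def MPadd {l : ℕ} (lam : MP l) (x : Node l) : MP l :=
  Function.update lam x.1 ((lam x.1).addBox x.2.1 x.2.2)

/-- Remove the box `x` from the multi-partition `lam`. -/
noncomputable def MPremove {l : ℕ} (lam : MP l) (x : Node l) : MP l :=
  Function.update lam x.1 ((lam x.1).removeBox x.2.1 x.2.2)

/-- The empty multi-partition. -/
def MPempty (l : ℕ) : MP l := fun _ => Ptn.empty

/-- A slope datum `(ξ_Ω, ξ_Ω̄, ξ_1, …, ξ_l)` of positive reals. -/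
structure Slope (l : ℕ) where
  xiO : ℝ
  xiObar : ℝ
  xi : Fin l → ℝ
  xiO_pos : 0 < xiO
  xiObar_pos : 0 < xiObar
  xi_pos : ∀ k, 0 < xi k

namespace Slope

/-- The height `h^ξ(k;i,j) = ξ_k + ξ_Ω i + ξ_Ω̄ j`. -/
def h {l : ℕ} (ξ : Slope l) (x : Node l) : ℝ :=
  ξ.xi x.1 + ξ.xiO * (x.2.1 : ℝ) + ξ.xiObar * (x.2.2 : ℝ)

/-- `ξ` is general: distinct triples have distinct heights. -/
def General {l : ℕ} (ξ : Slope l) : Prop :=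
  ∀ x y : Node l, 1 ≤ x.2.1 → 1 ≤ x.2.2 → 1 ≤ y.2.1 → 1 ≤ y.2.2 → ξ.h x = ξ.h y → x = y

/-- `ξ` is aligned: `|ξ_s - ξ_t| < ξ_Ω + ξ_Ω̄` for all `s, t`. -/
def Aligned {l : ℕ} (ξ : Slope l) : Prop :=
  ∀ s t : Fin l, |ξ.xi s - ξ.xi t| < ξ.xiO + ξ.xiObar

/-- `ξ` is integral: all entries are (positive) integers. -/
def Integral {l : ℕ} (ξ : Slope l) : Prop :=
  (∃ m : ℤ, ξ.xiO = (m : ℝ)) ∧ (∃ m : ℤ, ξ.xiObar = (m : ℝ)) ∧ ∀ k, ∃ m : ℤ, ξ.xi k = (m : ℝ)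

end Slope
/-- The triple `((i,j), s, t)` is `ξ`-illegal for `lam`. -/
def Illegal (n l : ℕ) (lam : MP l) (p : Fin l → ZMod n) (ξ : Slope l)
    (i j : ℕ) (s t : Fin l) : Prop :=
  (lam s).mem i j ∧
  (p s - p t + (((lam s).arm i j + (lam t).leg i j + 1 : ℤ) : ZMod n) = 0) ∧
  (-ξ.xiO < ξ.xi t - ξ.xi s + ξ.xiO * (((lam t).leg i j : ℤ) : ℝ)
      - ξ.xiObar * (((lam s).arm i j : ℤ) : ℝ)) ∧
  (ξ.xi t - ξ.xi s + ξ.xiO * (((lam t).leg i j : ℤ) : ℝ)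
      - ξ.xiObar * (((lam s).arm i j : ℤ) : ℝ) < ξ.xiObar)

/-- `lam` is `ξ`-regular: no triple is `ξ`-illegal for `lam`. -/
def Regular (n l : ℕ) (lam : MP l) (p : Fin l → ZMod n) (ξ : Slope l) : Prop :=
  ∀ (i j : ℕ) (s t : Fin l), ¬ Illegal n l lam p ξ i j s t

namespace Ptn

lemma row_anti (q : Ptn) {a b : ℕ} (hab : a ≤ b) : q.row b ≤ q.row a :=
  q.antitone' _ _ (Nat.sub_le_sub_right hab 1)

lemma dual_eq (q : Ptn) (j c : ℕ) (hc : ∀ m, 1 ≤ m → (j ≤ q.row m ↔ m ≤ c)) :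
    q.dual j = c := by
  have hset : {m : ℕ | 1 ≤ m ∧ j ≤ q.row m} = ↑(Finset.Icc 1 c) := by
    ext m
    simp only [Set.mem_ofPred_eq, Finset.coe_Icc, Set.mem_Icc]
    exact and_congr_right fun hm => hc m hm
  change Nat.card ↥{m : ℕ | 1 ≤ m ∧ j ≤ q.row m} = c
  rw [Nat.card_coe_set_eq, hset, Set.ncard_coe_finset]
  simp

lemma Removable.dual_eq {q : Ptn} {i j : ℕ} (h : q.Removable i j) : q.dual j = i := by
  obtain ⟨-, -, h1, h2⟩ := h
  refine q.dual_eq j i fun m _ => ⟨fun hm => ?_, fun hm => h1.symm.le.trans (q.row_anti hm)⟩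
  by_contra hlt
  have := q.row_anti (show i + 1 ≤ m by omega)
  omega

lemma Addable.dual_eq {q : Ptn} {i j : ℕ} (h : q.Addable i j) : q.dual j = i - 1 := by
  obtain ⟨hi, hj, h1, h2⟩ := h
  refine q.dual_eq j (i - 1) fun m hm1 => ⟨fun hm => ?_, fun hm => ?_⟩
  · by_contra hlt
    have := q.row_anti (show i ≤ m by omega)
    omega
  · have := q.row_anti hm
    omega

end Ptn

/-- for an aligned slope datum `ξ` and a `ξ`-regular `lam`, a removable `ib`-node
`r = (k;i,j)` and an addable `ib`-node `a = (k';i',j')` with `h(a) > h(r)` satisfy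
`h(a) ≥ h(r) + ξ_Ω + ξ_Ω̄`, and moreover `i' − 1 ≥ i` or `j' − 1 ≥ j`. -/
theorem stmt4 (n l : ℕ) (hn : 1 ≤ n) (hl : 1 ≤ l) (lam : MP l) (p : Fin l → ZMod n)
    (ξ : Slope l) (hal : ξ.Aligned) (hreg : Regular n l lam p ξ)
    (ib : ZMod n) (k k' : Fin l) (i j i' j' : ℕ)
    (hr : IsRem n l lam p ib (k, i, j)) (ha : IsAdd n l lam p ib (k', i', j'))
    (hgt : ξ.h (k', i', j') > ξ.h (k, i, j)) :
    ξ.h (k, i, j) + ξ.xiO + ξ.xiObar ≤ ξ.h (k', i', j') ∧ (i + 1 ≤ i' ∨ j + 1 ≤ j') := by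
  obtain ⟨hrem, hrc⟩ := hr
  obtain ⟨hadd, hac⟩ := ha
  have hdr := hrem.dual_eq
  have hda := hadd.dual_eq
  obtain ⟨hi, hj, hrow, -⟩ := hrem
  obtain ⟨hi', hj', hrow', -⟩ := hadd
  have hcol := hac.trans hrc.symm
  simp only [colorOf] at hcol hdr hda hrow hrow' hi hj hi' hj'
  have hO := ξ.xiO_pos
  have hObar := ξ.xiObar_pos
  -- Subtraction-free indices for the addable node: `i' = u + 1`, `j' = v + 1`.
  obtain ⟨u, rfl⟩ := Nat.exists_eq_add_of_le' hi'
  obtain ⟨v, rfl⟩ := Nat.exists_eq_add_of_le' hj'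
  simp only [Nat.add_sub_cancel] at hda hrow'
  simp only [Slope.h] at hgt ⊢
  push_cast at hcol hgt ⊢
  have hfirst : ξ.xi k + ξ.xiO * i + ξ.xiObar * j + ξ.xiO + ξ.xiObar
      ≤ ξ.xi k' + ξ.xiO * (u + 1) + ξ.xiObar * (v + 1) := by
    by_contra hlt
    rcases Nat.lt_or_ge v j with hvj | hvj
    · refine hreg i (v + 1) k k' ⟨⟨hi, by omega, by omega⟩, ?_, ?_, ?_⟩ <;>
        simp only [Ptn.arm, Ptn.leg, hrow, hda] <;> push_cast
      · linear_combination -hcol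
      · linarith
      · linarith
    · refine hreg (u + 1) j k' k ⟨⟨by omega, hj, by omega⟩, ?_, ?_, ?_⟩ <;>
        simp only [Ptn.arm, Ptn.leg, hrow', hdr] <;> push_cast
      · linear_combination hcol
      · linarith
      · linarith
  refine ⟨hfirst, ?_⟩
  by_contra hno
  have hui : ((u : ℝ) + 1) ≤ i := by exact_mod_cast (show u + 1 ≤ i by omega)
  have hvj : ((v : ℝ) + 1) ≤ j := by exact_mod_cast (show v + 1 ≤ j by omega)
  have h1 := mul_le_mul_of_nonneg_left hui hO.le
  have h2 := mul_le_mul_of_nonneg_left hvj hObar.le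
  have h3 := (abs_lt.mp (hal k' k)).2
  linarith
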